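/- arXiv:math/0506205 — 6 statements merged into one kernel-verified Lean document; each statement's English description precedes it below -/
import Mathlib

section
/- For every complex number z with Re z > 1, Kurepa's function satisfies the functional equation K(z) − K(z − 1) = Γ(z), where Γ is the complex Gamma function. -/
open MeasureTheory Set

/-- Kurepa's function `K(z) = ∫₀^∞ e^{-t} (t^z - 1)/(t - 1) dt`,
where `t^z = exp(z log t)` for `t > 0`. -/
noncomputable def kurepa (z : ℂ) : ℂ :=
  ∫ t in Ioi (0 : ℝ), (Real.exp (-t) : ℂ) * (((t : ℂ) ^ z - 1) / ((t : ℂ) - 1))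

lemma kurepa_integrable (w : ℂ) (hw : 0 < w.re) :
    IntegrableOn (fun t : ℝ => (Real.exp (-t) : ℂ) * (((t : ℂ) ^ w - 1) / ((t : ℂ) - 1)))
      (Ioi (0 : ℝ)) := by
  set f : ℝ → ℂ := fun t => (t : ℂ) ^ w with hf
  have hfc : Continuous f := Complex.continuous_ofReal_cpow_const hw
  have hfd : DifferentiableAt ℝ f 1 := by
    have hw0 : w ≠ 0 := by rintro rfl; simp at hw
    have h1 : HasDerivAt (fun x : ℂ => x ^ w) (w * ((1 : ℝ) : ℂ) ^ (w - 1) * 1) ((1 : ℝ) : ℂ) :=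
      (hasDerivAt_id (((1 : ℝ) : ℂ))).cpow_const (by simp)
    exact h1.comp_ofReal.differentiableAt
  have hdc : Continuous (dslope f 1) := by
    rw [← continuousOn_univ]
    exact (continuousOn_dslope Filter.univ_mem).2 ⟨hfc.continuousOn, hfd⟩
  set g : ℝ → ℂ := fun t => (Real.exp (-t) : ℂ) * dslope f 1 t with hg
  have hgc : Continuous g := by
    refine Continuous.mul ?_ hdc
    exact Complex.continuous_ofReal.comp (Real.continuous_exp.comp continuous_neg)
  have heq : ∀ t : ℝ, t ≠ 1 →
      g t = (Real.exp (-t) : ℂ) * (((t : ℂ) ^ w - 1) / ((t : ℂ) - 1)) := by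
    intro t ht
    change (Real.exp (-t) : ℂ) * dslope f 1 t = _
    rw [dslope_of_ne f ht, slope_def_module, Complex.real_smul]
    simp [hf, div_eq_inv_mul]
  have hae : ∀ᵐ t ∂(volume.restrict (Ioi (0 : ℝ))),
      g t = (Real.exp (-t) : ℂ) * (((t : ℂ) ^ w - 1) / ((t : ℂ) - 1)) := by
    refine ae_restrict_of_ae ?_
    have : ∀ᵐ t : ℝ, t ≠ 1 := by simp [ae_iff]
    filter_upwards [this] with t ht using heq t ht
  have hgi : IntegrableOn g (Ioi 0) := by
    rw [← Ioc_union_Ioi_eq_Ioi (show (0 : ℝ) ≤ 2 by norm_num)]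
    refine IntegrableOn.union ?_ ?_
    · exact (hgc.continuousOn.integrableOn_Icc).mono_set Ioc_subset_Icc_self
    · have hG := Complex.GammaIntegral_convergent (s := w + 1) (by simp; linarith)
      have hG1 := Complex.GammaIntegral_convergent (s := 1) (by simp)
      have hs : Ioi (2 : ℝ) ⊆ Ioi 0 := Ioi_subset_Ioi (by norm_num)
      have hH := (hG.mono_set hs).sub (hG1.mono_set hs)
      refine Integrable.mono hH hgc.aestronglyMeasurable ?_
      refine (ae_restrict_iff' measurableSet_Ioi).2 (Filter.Eventually.of_forall ?_)
      intro t ht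
      have ht : (2 : ℝ) < t := ht
      rw [heq t (by linarith)]
      simp only [Pi.sub_apply, add_sub_cancel_right, sub_self, Complex.cpow_zero]
      rw [← mul_sub, norm_mul, norm_mul, norm_div]
      gcongr
      · apply div_le_self (norm_nonneg _)
        have : ((t : ℂ) - 1) = ((t - 1 : ℝ) : ℂ) := by push_cast; rfl
        rw [this, Complex.norm_real, Real.norm_eq_abs, abs_of_pos (by linarith)]
        linarith
  exact (integrable_congr hae).1 hgi

/-- For `Re z > 1`, Kurepa's function satisfies `K(z) - K(z-1) = Γ(z)`. -/
theorem kurepa_functional_equation (z : ℂ) (hz : 1 < z.re) :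
    kurepa z - kurepa (z - 1) = Complex.Gamma z := by
  have h1 := kurepa_integrable z (by linarith)
  have h2 := kurepa_integrable (z - 1) (by simp; linarith)
  rw [Complex.Gamma_eq_integral (by linarith), Complex.GammaIntegral, kurepa, kurepa,
    ← integral_sub h1 h2]
  refine integral_congr_ae ?_
  have h0 : ∀ᵐ t : ℝ ∂(volume.restrict (Ioi (0 : ℝ))), t ≠ 1 :=
    ae_restrict_of_ae (by simp [ae_iff])
  filter_upwards [h0, ae_restrict_mem measurableSet_Ioi] with t ht ht0
  have ht0 : (0 : ℝ) < t := ht0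
  have hc : (t : ℂ) ≠ 0 := by exact_mod_cast ht0.ne'
  have hc1 : (t : ℂ) - 1 ≠ 0 := sub_ne_zero.2 (by exact_mod_cast ht)
  have hz1 : (t : ℂ) ^ z = (t : ℂ) ^ (z - 1) * t := by
    conv_lhs => rw [← sub_add_cancel z 1, Complex.cpow_add _ _ hc, Complex.cpow_one]
  rw [hz1]
  field_simp
  ring
end

section
/- For every natural number n ≥ 1 and every complex number z with Re z > n, Kurepa's function satisfies K(z) = K(z − n) + (P_n(z) − 1) · Γ(z − n), where P_n(z) = 1 + Σ_{j=0}^{n−1} Π_{i=0}^{j} (z − n + i) and Γ is the complex Gamma function. -/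
open MeasureTheory Set

/-- The polynomial `P n z = 1 + ∑_{j=0}^{n-1} ∏_{i=0}^{j} (z - n + i)`. -/
noncomputable def kurepaP (n : ℕ) (z : ℂ) : ℂ :=
  1 + ∑ j ∈ Finset.range n, ∏ i ∈ Finset.range (j + 1), (z - (n : ℂ) + (i : ℂ))

theorem kurepa_integrableOn (w : ℂ) (hw : 0 < w.re) :
    IntegrableOn (fun t : ℝ => (Real.exp (-t) : ℂ) * (((t : ℂ) ^ w - 1) / ((t : ℂ) - 1)))
      (Ioi 0) := by
  have h1 : IntegrableOn (fun t : ℝ => (Real.exp (-t) : ℂ) * (t : ℂ) ^ w) (Ioi 0) := by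
    have := Complex.GammaIntegral_convergent (s := w + 1) (by simp; linarith)
    simpa using this
  have h2 : IntegrableOn (fun t : ℝ => (Real.exp (-t) : ℂ)) (Ioi 0) := by
    have := Complex.GammaIntegral_convergent (s := 1) (by simp)
    simpa using this
  have h3 := (h1.sub h2).norm.const_mul 2
  have hm : AEStronglyMeasurable
      (fun t : ℝ => (Real.exp (-t) : ℂ) * (((t : ℂ) ^ w - 1) / ((t : ℂ) - 1))) volume := by
    apply Measurable.aestronglyMeasurable
    fun_prop
  have hsub : Ioi (0:ℝ) = (Ioi 0 \ Icc (1/2) 2) ∪ Icc (1/2) 2 := by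
    rw [diff_union_of_subset]
    intro x hx
    exact lt_of_lt_of_le (by norm_num) hx.1
  rw [hsub]
  refine IntegrableOn.union ?_ ?_
  · have h4 : IntegrableOn _ (Ioi (0:ℝ) \ Icc (1/2) 2) := IntegrableOn.mono_set h3 diff_subset
    refine Integrable.mono' h4 hm.restrict ?_
    filter_upwards [ae_restrict_mem (measurableSet_Ioi.diff measurableSet_Icc)] with t ht
    have hab : 1 / 2 ≤ |t - 1| := by
      by_contra! h
      rw [abs_lt] at h
      exact ht.2 ⟨by linarith, by linarith⟩
    have e : ‖(t:ℂ) - 1‖ = |t - 1| := by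
      rw [← Complex.ofReal_one, ← Complex.ofReal_sub, Complex.norm_real, Real.norm_eq_abs]
    simp only [Pi.sub_apply]
    rw [← mul_div_assoc, norm_div, e, mul_sub, mul_one, div_le_iff₀ (by linarith)]
    nlinarith [norm_nonneg ((Real.exp (-t) : ℂ) * (t : ℂ) ^ w - (Real.exp (-t) : ℂ))]
  · have hpos : ∀ t ∈ Icc (1/2:ℝ) 2, 0 < t := fun t ht => lt_of_lt_of_le (by norm_num) ht.1
    have hd : DifferentiableAt ℝ (fun t : ℝ => (t : ℂ) ^ w) 1 :=
      (hasDerivAt_ofReal_cpow_const' one_ne_zero (r := w - 1) (by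
        intro h; have := congrArg Complex.re h; simp at this; linarith)).differentiableAt.const_mul w |>.congr_of_eventuallyEq (by
        have hw0 : w ≠ 0 := by rintro rfl; simp at hw
        refine Filter.Eventually.of_forall fun t => ?_
        simp; field_simp)
    have hc : ContinuousOn (fun t : ℝ => (t : ℂ) ^ w) (Icc (1/2) 2) := by
      intro t ht
      exact (Complex.continuousAt_ofReal_cpow_const t w (Or.inr (hpos t ht).ne')).continuousWithinAt
    have hs : ContinuousOn (dslope (fun t : ℝ => (t : ℂ) ^ w) 1) (Icc (1/2) 2) :=
      (continuousOn_dslope (Icc_mem_nhds (by norm_num) (by norm_num))).2 ⟨hc, hd⟩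
    have hi : IntegrableOn (fun t : ℝ => (Real.exp (-t) : ℂ) * dslope (fun t : ℝ => (t : ℂ) ^ w) 1 t)
        (Icc (1/2) 2) := by
      apply ContinuousOn.integrableOn_compact isCompact_Icc
      exact ContinuousOn.mul (by fun_prop) hs
    refine hi.congr_fun_ae ?_
    have : ∀ᵐ t : ℝ, t ≠ 1 := by simp [ae_iff]
    filter_upwards [ae_restrict_of_ae this] with t ht
    rw [dslope_of_ne _ ht, slope_def_module]
    congr 1
    rw [Complex.real_smul]
    push_cast
    rw [Complex.one_cpow, div_eq_inv_mul]

theorem kurepa_succ (w : ℂ) (hw : 0 < w.re) :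
    kurepa (w + 1) = kurepa w + Complex.Gamma (w + 1) := by
  have hw1 : 0 < (w + 1).re := by simp; linarith
  rw [Complex.Gamma_eq_integral hw1, Complex.GammaIntegral]
  unfold kurepa
  rw [← integral_add (kurepa_integrableOn w hw) (Complex.GammaIntegral_convergent hw1)]
  apply integral_congr_ae
  have : ∀ᵐ t : ℝ, t ≠ 1 := by simp [ae_iff]
  filter_upwards [ae_restrict_of_ae this, ae_restrict_mem measurableSet_Ioi] with t ht ht0
  have h0 : (t : ℂ) ≠ 0 := by exact_mod_cast (ne_of_gt ht0)
  have h1 : (t : ℂ) - 1 ≠ 0 := sub_ne_zero.2 (by exact_mod_cast ht)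
  rw [Complex.cpow_add _ _ h0, Complex.cpow_one, add_sub_cancel_right]
  field_simp
  ring

theorem kurepa_add_nat (w : ℂ) (hw : 0 < w.re) (n : ℕ) :
    kurepa (w + n) = kurepa w +
      (∑ j ∈ Finset.range n, ∏ i ∈ Finset.range (j + 1), (w + (i : ℂ))) * Complex.Gamma w := by
  have hg : ∀ m : ℕ, Complex.Gamma (w + m) =
      (∏ i ∈ Finset.range m, (w + (i : ℂ))) * Complex.Gamma w := by
    intro m
    induction m with
    | zero => simp
    | succ m ih =>
      have : w + m ≠ 0 := by
        intro h
        have := congrArg Complex.re h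
        simp at this
        have : (0:ℝ) ≤ m := Nat.cast_nonneg m
        linarith
      rw [Nat.cast_succ, ← add_assoc, Complex.Gamma_add_one _ this, ih, Finset.prod_range_succ]
      ring
  induction n with
  | zero => simp
  | succ n ih =>
    have hp : 0 < (w + n).re := by
      have : (0:ℝ) ≤ n := Nat.cast_nonneg n
      simp; linarith
    have h := hg (n + 1)
    rw [Nat.cast_succ, ← add_assoc] at h
    rw [Nat.cast_succ, ← add_assoc, kurepa_succ _ hp, ih, h, Finset.sum_range_succ]
    ring

/-- For `n ≥ 1` and `Re z > n`, Kurepa's function satisfies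
`K(z) = K(z - n) + (P_n(z) - 1) Γ(z - n)`. -/
theorem kurepa_eq_kurepa_sub_nat_add_polynomial_mul_Gamma
    (n : ℕ) (hn : 1 ≤ n) (z : ℂ) (hz : (n : ℝ) < z.re) :
    kurepa z = kurepa (z - n) + (kurepaP n z - 1) * Complex.Gamma (z - n) := by
  have h := kurepa_add_nat (z - n) (by simpa using hz) n
  rw [sub_add_cancel] at h
  rw [h, kurepaP, add_sub_cancel_left]
end

section
/- For every natural number n ≥ 1 and every complex number z ∉ {0, 1, …, n−1}, the rational functions Q_n defined by Q_1(z) = (z+1)/z, Q_2(z) = z/(z−1), and the recurrence Q_n(z) = ((z−n+2)/(z−n+1))·Q_{n−1}(z) − (1/(z−n+1))·Q_{n−2}(z) for n ≥ 3, satisfy the explicit formula Q_n(z) = 1 + Σ_{j=0}^{n−1} Π_{i=0}^{j} 1/(z − i). -/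
/-- The rational functions `Q n` defined by `Q 1 z = (z+1)/z`, `Q 2 z = z/(z-1)`
and, for `3 ≤ m`, by
`Q m z = ((z-m+2)/(z-m+1)) Q (m-1) z - (1/(z-m+1)) Q (m-2) z`,
satisfy the explicit formula `Q n z = 1 + ∑_{j=0}^{n-1} ∏_{i=0}^{j} 1/(z-i)`
for all `n ≥ 1` and `z ∉ {0, 1, …, n-1}`. -/
theorem kurepa_rational_Q_explicit (n : ℕ) (hn : 1 ≤ n) (z : ℂ)
    (hz : ∀ m : ℕ, m < n → z ≠ (m : ℂ))
    (Q : ℕ → ℂ → ℂ)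
    (hQ1 : Q 1 z = (z + 1) / z)
    (hQ2 : 2 ≤ n → Q 2 z = z / (z - 1))
    (hQrec : ∀ m : ℕ, 3 ≤ m → m ≤ n →
      Q m z = ((z - (m : ℂ) + 2) / (z - (m : ℂ) + 1)) * Q (m - 1) z
        - (1 / (z - (m : ℂ) + 1)) * Q (m - 2) z) :
    Q n z = 1 + ∑ j ∈ Finset.range n, ∏ i ∈ Finset.range (j + 1),
      (1 / (z - (i : ℂ))) := by
  have key : ∀ k : ℕ,
      (k + 1 ≤ n → Q (k + 1) z = 1 + ∑ j ∈ Finset.range (k + 1),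
        ∏ i ∈ Finset.range (j + 1), (1 / (z - (i : ℂ)))) ∧
      (k + 2 ≤ n → Q (k + 2) z = 1 + ∑ j ∈ Finset.range (k + 2),
        ∏ i ∈ Finset.range (j + 1), (1 / (z - (i : ℂ)))) := by
    intro k
    induction k with
    | zero =>
      have h0 : z ≠ 0 := by simpa using hz 0 (by omega)
      refine ⟨fun _ => ?_, fun h => ?_⟩
      · simp only [zero_add, hQ1, Finset.sum_range_one, Finset.prod_range_one,
          Nat.cast_zero, sub_zero]
        field_simp
      · have h1 : z - 1 ≠ 0 := sub_ne_zero.mpr (by simpa using hz 1 (by omega))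
        simp only [zero_add, hQ2 h, Finset.sum_range_succ, Finset.prod_range_succ,
          Finset.sum_range_zero, Finset.prod_range_zero,
          Nat.cast_zero, Nat.cast_one, sub_zero]
        field_simp
        ring
    | succ k ih =>
      refine ⟨fun h => ih.2 h, fun h => ?_⟩
      have e1 := ih.1 (by omega)
      have e2 := ih.2 (by omega)
      have hr := hQrec (k + 3) (by omega) h
      have hne : z - ((k + 2 : ℕ) : ℂ) ≠ 0 := sub_ne_zero.mpr (hz (k + 2) (by omega))
      have a1 : k + 3 - 1 = k + 2 := rfl
      have a2 : k + 3 - 2 = k + 1 := rfl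
      rw [a1, a2] at hr
      have b1 : z - ((k + 3 : ℕ) : ℂ) + 1 = z - ((k + 2 : ℕ) : ℂ) := by push_cast; ring
      have b2 : z - ((k + 3 : ℕ) : ℂ) + 2 = z - ((k + 2 : ℕ) : ℂ) + 1 := by push_cast; ring
      rw [b1, b2, e2] at hr
      rw [Finset.sum_range_succ _ (k + 1)] at hr
      change Q (k + 3) z = 1 + ∑ j ∈ Finset.range (k + 3), _
      rw [Finset.sum_range_succ _ (k + 2), Finset.sum_range_succ _ (k + 1),
        Finset.prod_range_succ _ (k + 2), hr, e1]
      change _ = 1 + (_ + ∏ i ∈ Finset.range (k + 1 + 1), (1 / (z - (i : ℂ)))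
        + (∏ i ∈ Finset.range (k + 1 + 1), (1 / (z - (i : ℂ)))) * _)
      generalize (∏ i ∈ Finset.range (k + 1 + 1), (1 / (z - (i : ℂ)))) = P
      generalize (∑ j ∈ Finset.range (k + 1),
        ∏ i ∈ Finset.range (j + 1), (1 / (z - (i : ℂ)))) = S
      generalize z - ((k + 2 : ℕ) : ℂ) = w at *
      field_simp
      ring
  obtain ⟨k, rfl⟩ : ∃ k, n = k + 1 := ⟨n - 1, by omega⟩
  exact (key k).1 le_rfl
end

section
/- For every natural number n ≥ 1 and every complex number z ∉ {0, 1, …, n−1}, the rational functions R_n defined by R_1(z) = 1/z, R_2(z) = 1/(z−1), and the recurrence R_n(z) = ((z−n+2)/(z−n+1))·R_{n−1}(z) − (1/(z−n+1))·R_{n−2}(z) for n ≥ 3, satisfy the explicit formula R_n(z) = Σ_{j=0}^{n−1} Π_{i=0}^{j} 1/(z − i). -/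
/-- The rational functions `R n` defined by `R 1 z = 1/z`, `R 2 z = 1/(z-1)`
and, for `3 ≤ m`, by
`R m z = ((z-m+2)/(z-m+1)) R (m-1) z - (1/(z-m+1)) R (m-2) z`,
satisfy the explicit formula `R n z = ∑_{j=0}^{n-1} ∏_{i=0}^{j} 1/(z-i)`
for all `n ≥ 1` and `z ∉ {0, 1, …, n-1}`. -/
theorem kurepa_rational_R_explicit (n : ℕ) (hn : 1 ≤ n) (z : ℂ)
    (hz : ∀ m : ℕ, m < n → z ≠ (m : ℂ))
    (R : ℕ → ℂ → ℂ)
    (hR1 : R 1 z = 1 / z)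
    (hR2 : 2 ≤ n → R 2 z = 1 / (z - 1))
    (hRrec : ∀ m : ℕ, 3 ≤ m → m ≤ n →
      R m z = ((z - (m : ℂ) + 2) / (z - (m : ℂ) + 1)) * R (m - 1) z
        - (1 / (z - (m : ℂ) + 1)) * R (m - 2) z) :
    R n z = ∑ j ∈ Finset.range n, ∏ i ∈ Finset.range (j + 1),
      (1 / (z - (i : ℂ))) := by
  have key : ∀ k : ℕ, (k + 1 ≤ n → R (k + 1) z = ∑ j ∈ Finset.range (k + 1),
      ∏ i ∈ Finset.range (j + 1), (1 / (z - (i : ℂ)))) ∧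
      (k + 2 ≤ n → R (k + 2) z = ∑ j ∈ Finset.range (k + 2),
      ∏ i ∈ Finset.range (j + 1), (1 / (z - (i : ℂ)))) := by
    intro k
    induction k with
    | zero =>
      refine ⟨fun _ => by simp [hR1], fun h => ?_⟩
      have h0 : z ≠ 0 := by simpa using hz 0 (by omega)
      have h1 : z - 1 ≠ 0 := sub_ne_zero.mpr (by simpa using hz 1 (by omega))
      simp only [Nat.zero_add, hR2 h, Finset.sum_range_succ, Finset.prod_range_succ,
        Finset.sum_range_zero, Finset.prod_range_zero]
      push_cast
      rw [sub_zero]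
      field_simp
      ring
    | succ k ih =>
      refine ⟨ih.2, fun h => ?_⟩
      have hr := hRrec (k + 3) (by omega) h
      have hne : z - ((k : ℂ) + 2) ≠ 0 :=
        sub_ne_zero.mpr (by simpa using hz (k + 2) (by omega))
      rw [show k + 3 - 1 = k + 2 from rfl, show k + 3 - 2 = k + 1 from rfl,
        ih.1 (by omega), ih.2 (by omega)] at hr
      rw [show k + 1 + 2 = k + 3 from rfl, hr]
      rw [Finset.sum_range_succ _ (k + 2), Finset.sum_range_succ _ (k + 1),
        Finset.prod_range_succ _ (k + 2)]
      generalize (∑ j ∈ Finset.range (k + 1),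
        ∏ i ∈ Finset.range (j + 1), (1 / (z - (i : ℂ)))) = S
      rw [show k + 1 + 1 = k + 2 from rfl]
      generalize (∏ i ∈ Finset.range (k + 2), (1 / (z - (i : ℂ)))) = P
      push_cast
      rw [show z - ((k : ℂ) + 3) + 2 = (z - ((k : ℂ) + 2)) + 1 by ring,
        show z - ((k : ℂ) + 3) + 1 = z - ((k : ℂ) + 2) by ring]
      generalize z - ((k : ℂ) + 2) = w at hne
      field_simp
      ring
  obtain ⟨k, rfl⟩ : ∃ k, n = k + 1 := ⟨n - 1, by omega⟩
  exact (key k).1 le_rfl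
end

section
/- For every real number x ∈ [0, 1], the real Gamma function satisfies Γ(x + 1/2) < x² − (7/4)·x + 9/5. -/
/-- For `x ∈ [0,1]`, the real Gamma function satisfies
`Γ(x + 1/2) < x² - (7/4) x + 9/5`. -/
theorem Gamma_add_half_lt (x : ℝ) (hx : x ∈ Set.Icc (0 : ℝ) 1) :
    Real.Gamma (x + 1 / 2) < x ^ 2 - (7 / 4) * x + 9 / 5 := by
  obtain ⟨h0, h1⟩ := hx
  have hc := Real.convexOn_Gamma.2
  rcases le_total x (1 / 2) with h | h
  · have key := hc (x := 1 / 2) (y := 1) (a := 1 - 2 * x) (b := 2 * x)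
      (Set.mem_Ioi.2 (by norm_num)) (Set.mem_Ioi.2 (by norm_num))
      (by linarith) (by linarith) (by ring)
    simp only [smul_eq_mul] at key
    rw [Real.Gamma_one_half_eq, Real.Gamma_one,
      show (1 - 2 * x) * (1 / 2) + 2 * x * 1 = x + 1 / 2 by ring] at key
    have hs : √Real.pi < 1.7725 := by
      rw [Real.sqrt_lt' (by norm_num)]
      have := Real.pi_lt_d4
      norm_num at this ⊢
      linarith
    have : (1 - 2 * x) * √Real.pi ≤ (1 - 2 * x) * 1.7725 :=
      mul_le_mul_of_nonneg_left hs.le (by linarith)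
    norm_num at this
    nlinarith [sq_nonneg (x - 0.1025)]
  · have key := hc (x := 1) (y := 3 / 2) (a := 2 - 2 * x) (b := 2 * x - 1)
      (Set.mem_Ioi.2 (by norm_num)) (Set.mem_Ioi.2 (by norm_num))
      (by linarith) (by linarith) (by ring)
    simp only [smul_eq_mul] at key
    rw [Real.Gamma_one,
      show (2 - 2 * x) * 1 + (2 * x - 1) * (3 / 2) = x + 1 / 2 by ring] at key
    have hs := Real.Gamma_three_div_two_lt_one
    have : (2 * x - 1) * Real.Gamma (3 / 2) ≤ (2 * x - 1) * 1 :=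
      mul_le_mul_of_nonneg_left hs.le (by linarith)
    nlinarith [sq_nonneg (x - 7 / 8)]
end

section
/- For every real number x ∈ [0, 1], the integral ∫₀^∞ e^{-t} · t^x · (log t)/(t − 1) dt (which equals the derivative K′(x) of Kurepa's function, with the integrand extended by continuity at t = 1) is at most Γ(x + 1/2), where Γ is the real Gamma function. -/
open MeasureTheory Set

lemma log_div_nonneg_aux (t : ℝ) (ht : 0 < t) : 0 ≤ Real.log t / (t - 1) := by
  rcases le_total 1 t with h | h
  · exact div_nonneg (Real.log_nonneg h) (by linarith)
  · exact div_nonneg_of_nonpos (Real.log_nonpos ht.le h) (by linarith)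

lemma log_div_le_aux (t : ℝ) (ht : 0 < t) :
    Real.log t / (t - 1) ≤ t ^ (-(1 / 2) : ℝ) := by
  obtain ⟨s, hs, rfl⟩ : ∃ s : ℝ, 0 < s ∧ t = s ^ 2 :=
    ⟨Real.sqrt t, Real.sqrt_pos.2 ht, (Real.sq_sqrt ht.le).symm⟩
  have e : (s ^ 2) ^ (-(1 / 2) : ℝ) = s⁻¹ := by
    rw [← Real.rpow_natCast s 2, ← Real.rpow_mul hs.le]
    norm_num [Real.rpow_neg_one]
  rw [e, Real.log_pow]
  push_cast
  have hsh := Real.sinh_log hs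
  have hid : s⁻¹ * (s ^ 2 - 1) = s - s⁻¹ := by field_simp
  rcases lt_trichotomy s 1 with h | h | h
  · have h1 := Real.sinh_le_self_iff.2 (Real.log_nonpos hs.le h.le)
    rw [div_le_iff_of_neg (by nlinarith), hid]
    linarith
  · subst h; simp
  · have h1 := Real.self_le_sinh_iff.2 (Real.log_nonneg h.le)
    rw [div_le_iff₀ (by nlinarith), hid]
    linarith

/-- For `x ∈ [0,1]`, the integral `∫₀^∞ e^{-t} t^x (log t)/(t-1) dt`
(the derivative of Kurepa's function) is at most `Γ(x + 1/2)`. -/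
theorem kurepa_deriv_integral_le_Gamma (x : ℝ) (hx : x ∈ Set.Icc (0 : ℝ) 1) :
    (∫ t in Ioi (0 : ℝ), Real.exp (-t) * t ^ x * (Real.log t / (t - 1)))
      ≤ Real.Gamma (x + 1 / 2) := by
  have hp : 0 < x + 1 / 2 := by linarith [hx.1]
  rw [Real.Gamma_eq_integral hp]
  refine integral_mono_of_nonneg ?_ (Real.GammaIntegral_convergent hp) ?_
  · refine (ae_restrict_iff' measurableSet_Ioi).2 (Filter.Eventually.of_forall fun t ht => ?_)
    have ht : 0 < t := ht
    have := log_div_nonneg_aux t ht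
    simp only [Pi.zero_apply]
    positivity
  · refine (ae_restrict_iff' measurableSet_Ioi).2 (Filter.Eventually.of_forall fun t ht => ?_)
    have ht : 0 < t := ht
    have h := log_div_le_aux t ht
    have e : t ^ (x + 1 / 2 - 1) = t ^ x * t ^ (-(1 / 2) : ℝ) := by
      rw [← Real.rpow_add ht]; congr 1; ring
    simp only [e, ← mul_assoc]
    exact mul_le_mul_of_nonneg_left h (by positivity)
end
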